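/- Lax representation for the dual system in cartesian coordinates (with time change). Let x ≠ 0, H̃ = 4·p_x·p_y/x, and for λ ∈ ℝ define L̃(λ) = [[p_x + (2λ − x)p_y, λ² − λx + (x² − 2y)/4], [−4p_y² + H̃, −(p_x + (2λ − x)p_y)]] and Ã = (1/x)·[[0,1],[0,0]]. Then for every λ and every matrix entry (i,j), {H̃, L̃(λ)_{ij}} = ([Ã, L̃(λ)])_{ij}. -/

import Mathlib

/-- The canonical Poisson bracket of two functions of `(x, y, pₓ, p_y)` on `ℝ⁴`:
`{F,G} = ∂F/∂pₓ·∂G/∂x − ∂F/∂x·∂G/∂pₓ + ∂F/∂p_y·∂G/∂y − ∂F/∂y·∂G/∂p_y`. -/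
noncomputable def pb (F G : ℝ → ℝ → ℝ → ℝ → ℝ) (x y px py : ℝ) : ℝ :=
    deriv (fun s => F x y s py) px * deriv (fun s => G s y px py) x
  - deriv (fun s => F s y px py) x * deriv (fun s => G x y s py) px
  + deriv (fun s => F x y px s) py * deriv (fun s => G x s px py) y
  - deriv (fun s => F x s px py) y * deriv (fun s => G x y px s) py

/-- The dual Hamiltonian `H̃ = 4pₓp_y/x` obtained by the non-canonical change of
the time variable from the cartesian free system. -/
noncomputable def Ham : ℝ → ℝ → ℝ → ℝ → ℝ := fun x _ px py => 4 * px * py / x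

/-- The dual Lax matrix in cartesian coordinates: the cartesian Lax matrix with
`H̃` added to the lower-left entry. -/
noncomputable def L (lam x y px py : ℝ) : Matrix (Fin 2) (Fin 2) ℝ :=
  !![px + (2 * lam - x) * py, lam ^ 2 - lam * x + (x ^ 2 - 2 * y) / 4;
     -(4 * py ^ 2) + Ham x y px py, -(px + (2 * lam - x) * py)]

/-- The constant part of the second Lax matrix; the second Lax matrix is
`Ã = (1/x) • A`. -/
noncomputable def A : Matrix (Fin 2) (Fin 2) ℝ := !![0, 1; 0, 0]

/-!
The cartesian free system with Hamiltonian `H = 4pₓp_y` has a Lax pair `{H, M} = [A, M]`.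
Put `v = 1/x` and `H̃ = vH`. By the Leibniz rule `{H̃, M} = v[A, M] + H{v, M}`, and the defect
`H{v, M} = Hv² ∂M/∂pₓ` equals `[vA, H̃E]` for the lower-left matrix unit `E`, because
`∂M/∂pₓ = [A, E]`. Since `{H̃, H̃E} = 0`, the matrix `L̃ = M + H̃E` absorbs the defect.
-/

/-- Separate differentiability of a function on phase space in each of the four canonical
variables, which is all that the calculus of `pb` requires. -/
structure PartiallyDifferentiableAt (F : ℝ → ℝ → ℝ → ℝ → ℝ) (x y px py : ℝ) : Prop where
  diff_x : DifferentiableAt ℝ (fun s => F s y px py) x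
  diff_y : DifferentiableAt ℝ (fun s => F x s px py) y
  diff_px : DifferentiableAt ℝ (fun s => F x y s py) px
  diff_py : DifferentiableAt ℝ (fun s => F x y px s) py

section PoissonBracket

variable {F G K : ℝ → ℝ → ℝ → ℝ → ℝ} {x y px py : ℝ}

theorem PartiallyDifferentiableAt.mul (hF : PartiallyDifferentiableAt F x y px py)
    (hG : PartiallyDifferentiableAt G x y px py) :
    PartiallyDifferentiableAt (F * G) x y px py :=
  ⟨hF.diff_x.mul hG.diff_x, hF.diff_y.mul hG.diff_y, hF.diff_px.mul hG.diff_px,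
    hF.diff_py.mul hG.diff_py⟩

theorem PartiallyDifferentiableAt.neg (hF : PartiallyDifferentiableAt F x y px py) :
    PartiallyDifferentiableAt (-F) x y px py :=
  ⟨hF.diff_x.neg, hF.diff_y.neg, hF.diff_px.neg, hF.diff_py.neg⟩

theorem PartiallyDifferentiableAt.const_smul (hF : PartiallyDifferentiableAt F x y px py)
    (c : ℝ) : PartiallyDifferentiableAt (c • F) x y px py :=
  ⟨hF.diff_x.const_smul c, hF.diff_y.const_smul c, hF.diff_px.const_smul c, hF.diff_py.const_smul c⟩

theorem pb_self (F : ℝ → ℝ → ℝ → ℝ → ℝ) (x y px py : ℝ) : pb F F x y px py = 0 := by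
  unfold pb
  ring

theorem pb_add_right (F : ℝ → ℝ → ℝ → ℝ → ℝ) (hG : PartiallyDifferentiableAt G x y px py)
    (hK : PartiallyDifferentiableAt K x y px py) :
    pb F (G + K) x y px py = pb F G x y px py + pb F K x y px py := by
  simp only [pb, Pi.add_apply, deriv_fun_add hG.diff_x hK.diff_x, deriv_fun_add hG.diff_y hK.diff_y,
    deriv_fun_add hG.diff_px hK.diff_px, deriv_fun_add hG.diff_py hK.diff_py]
  ring

theorem pb_const_smul_right (c : ℝ) (F G : ℝ → ℝ → ℝ → ℝ → ℝ) (x y px py : ℝ) :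
    pb F (c • G) x y px py = c * pb F G x y px py := by
  simp only [pb, Pi.smul_apply, smul_eq_mul, deriv_const_mul_field]
  ring

theorem pb_mul_left (hF : PartiallyDifferentiableAt F x y px py)
    (hG : PartiallyDifferentiableAt G x y px py) (K : ℝ → ℝ → ℝ → ℝ → ℝ) :
    pb (F * G) K x y px py =
      F x y px py * pb G K x y px py + G x y px py * pb F K x y px py := by
  simp only [pb, Pi.mul_apply, deriv_fun_mul hF.diff_x hG.diff_x, deriv_fun_mul hF.diff_y hG.diff_y,
    deriv_fun_mul hF.diff_px hG.diff_px, deriv_fun_mul hF.diff_py hG.diff_py]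
  ring

end PoissonBracket

/-- The entrywise Poisson bracket `{F, M}` of a function with a matrix-valued function on phase
space: the left-hand side of a Lax equation. -/
noncomputable def pbMatrix {m n : Type*} (F : ℝ → ℝ → ℝ → ℝ → ℝ)
    (M : ℝ → ℝ → ℝ → ℝ → Matrix m n ℝ) (x y px py : ℝ) : Matrix m n ℝ :=
  .of fun i j => pb F (fun x y px py => M x y px py i j) x y px py

section TimeChange

variable {m n : Type*} {x y px py : ℝ}

theorem pbMatrix_mul_left {F G : ℝ → ℝ → ℝ → ℝ → ℝ} (hF : PartiallyDifferentiableAt F x y px py)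
    (hG : PartiallyDifferentiableAt G x y px py) (M : ℝ → ℝ → ℝ → ℝ → Matrix m n ℝ) :
    pbMatrix (F * G) M x y px py =
      F x y px py • pbMatrix G M x y px py + G x y px py • pbMatrix F M x y px py := by
  ext i j
  exact pb_mul_left hF hG fun x y px py => M x y px py i j

theorem pbMatrix_add_self_smul {F : ℝ → ℝ → ℝ → ℝ → ℝ} {M : ℝ → ℝ → ℝ → ℝ → Matrix m n ℝ}
    (hF : PartiallyDifferentiableAt F x y px py)
    (hM : ∀ i j, PartiallyDifferentiableAt (fun x y px py => M x y px py i j) x y px py)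
    (E : Matrix m n ℝ) :
    pbMatrix F (fun x y px py => M x y px py + F x y px py • E) x y px py =
      pbMatrix F M x y px py := by
  ext i j
  have entry : (fun x y px py => (M x y px py + F x y px py • E) i j) =
      (fun x y px py => M x y px py i j) + E i j • F := by
    funext x y px py
    simp [mul_comm]
  simp only [pbMatrix, Matrix.of_apply, entry, pb_add_right F (hM i j) (hF.const_smul _),
    pb_const_smul_right, pb_self, mul_zero, add_zero]

theorem lax_time_change [Fintype n] {v H : ℝ → ℝ → ℝ → ℝ → ℝ}
    {M : ℝ → ℝ → ℝ → ℝ → Matrix n n ℝ} {B E : Matrix n n ℝ}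
    (hv : PartiallyDifferentiableAt v x y px py) (hH : PartiallyDifferentiableAt H x y px py)
    (hM : ∀ i j, PartiallyDifferentiableAt (fun x y px py => M x y px py i j) x y px py)
    (lax : pbMatrix H M x y px py = ⁅B, M x y px py⁆)
    (defect : pbMatrix v M x y px py = v x y px py ^ 2 • ⁅B, E⁆) :
    pbMatrix (v * H) (fun x y px py => M x y px py + (v * H) x y px py • E) x y px py =
      ⁅v x y px py • B, M x y px py + (v * H) x y px py • E⁆ := by
  rw [pbMatrix_add_self_smul (hv.mul hH) hM, pbMatrix_mul_left hv hH, lax, defect]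
  simp only [Ring.lie_def, mul_add, add_mul, smul_mul_assoc, mul_smul_comm, Pi.mul_apply]
  module

end TimeChange

/-- The Hamiltonian `H = 4pₓp_y` of the cartesian free system. -/
def freeHam : ℝ → ℝ → ℝ → ℝ → ℝ := fun _ _ px py => 4 * px * py

/-- The Lax matrix of the cartesian free system, from which the dual one is obtained by adding
`H̃` to the lower-left entry. -/
noncomputable def freeLax (lam x y px py : ℝ) : Matrix (Fin 2) (Fin 2) ℝ :=
  !![px + (2 * lam - x) * py, lam ^ 2 - lam * x + (x ^ 2 - 2 * y) / 4;
     -(4 * py ^ 2), -(px + (2 * lam - x) * py)]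

/-- The factor `v(q) = 1/x` implementing the time change, as a function on phase space. -/
noncomputable def timeFactor : ℝ → ℝ → ℝ → ℝ → ℝ := fun x _ _ _ => 1 / x

theorem Ham_eq_timeFactor_mul_freeHam : Ham = timeFactor * freeHam := by
  funext x y px py
  simp only [Ham, timeFactor, freeHam, Pi.mul_apply]
  ring

theorem L_eq_freeLax_add_smul (lam x y px py : ℝ) :
    L lam x y px py = freeLax lam x y px py + Ham x y px py • !![0, 0; 1, 0] := by
  ext i j
  fin_cases i <;> fin_cases j <;> simp [L, freeLax]

section PartialDerivatives

variable (lam x y px py : ℝ)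

theorem partiallyDifferentiableAt_freeHam : PartiallyDifferentiableAt freeHam x y px py := by
  constructor <;> unfold freeHam <;> fun_prop

theorem partiallyDifferentiableAt_timeFactor {x : ℝ} (hx : x ≠ 0) :
    PartiallyDifferentiableAt timeFactor x y px py := by
  constructor <;> unfold timeFactor <;> fun_prop (disch := exact hx)

theorem partiallyDifferentiableAt_freeLax (i j : Fin 2) :
    PartiallyDifferentiableAt (fun x y px py => freeLax lam x y px py i j) x y px py := by
  have diag : PartiallyDifferentiableAt (fun x _ px py => px + (2 * lam - x) * py) x y px py := by
    constructor <;> fun_prop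
  have upper : PartiallyDifferentiableAt
      (fun x y _ _ => lam ^ 2 - lam * x + (x ^ 2 - 2 * y) / 4) x y px py := by
    constructor <;> fun_prop
  have lower : PartiallyDifferentiableAt (fun _ _ _ py => -(4 * py ^ 2)) x y px py := by
    constructor <;> fun_prop
  fin_cases i <;> fin_cases j
  exacts [diag, upper, lower, diag.neg]

theorem deriv_freeLax_x (i j : Fin 2) :
    deriv (fun s => freeLax lam s y px py i j) x = !![-py, x / 2 - lam; 0, py] i j := by
  have diag : HasDerivAt (fun s => px + (2 * lam - s) * py) (-py) x := by
    simpa using (((hasDerivAt_id' x).const_sub (2 * lam)).mul_const py).const_add px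
  have upper : HasDerivAt (fun s => lam ^ 2 - lam * s + (s ^ 2 - 2 * y) / 4) (x / 2 - lam) x :=
    ((((hasDerivAt_id' x).const_mul lam).const_sub (lam ^ 2)).add
      (((hasDerivAt_pow 2 x).sub_const (2 * y)).div_const 4)).congr_deriv (by norm_num; ring)
  fin_cases i <;> fin_cases j
  exacts [diag.deriv, upper.deriv, deriv_const _ _, diag.neg.deriv.trans (neg_neg py)]

theorem deriv_freeLax_y (i j : Fin 2) :
    deriv (fun s => freeLax lam x s px py i j) y = !![0, -(1 / 2); 0, 0] i j := by
  have upper : HasDerivAt (fun s => lam ^ 2 - lam * x + (x ^ 2 - 2 * s) / 4) (-(1 / 2)) y :=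
    (((((hasDerivAt_id' y).const_mul 2).const_sub (x ^ 2)).div_const 4).const_add _).congr_deriv
      (by norm_num)
  fin_cases i <;> fin_cases j
  exacts [deriv_const _ _, upper.deriv, deriv_const _ _, deriv_const _ _]

theorem deriv_freeLax_px (i j : Fin 2) :
    deriv (fun s => freeLax lam x y s py i j) px = !![1, 0; 0, -1] i j := by
  have diag : HasDerivAt (fun s => s + (2 * lam - x) * py) 1 px :=
    (hasDerivAt_id' px).add_const _
  fin_cases i <;> fin_cases j
  exacts [diag.deriv, deriv_const _ _, deriv_const _ _, diag.neg.deriv]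

end PartialDerivatives

theorem pb_freeHam (F : ℝ → ℝ → ℝ → ℝ → ℝ) (x y px py : ℝ) :
    pb freeHam F x y px py =
      4 * py * deriv (fun s => F s y px py) x + 4 * px * deriv (fun s => F x s px py) y := by
  simp [pb, freeHam]

theorem pb_timeFactor (F : ℝ → ℝ → ℝ → ℝ → ℝ) (x y px py : ℝ) :
    pb timeFactor F x y px py =
      timeFactor x y px py ^ 2 * deriv (fun s => F x y s py) px := by
  simp [pb, timeFactor]

theorem pbMatrix_freeHam_freeLax (lam x y px py : ℝ) :
    pbMatrix freeHam (freeLax lam) x y px py = ⁅A, freeLax lam x y px py⁆ := by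
  ext i j
  rw [pbMatrix, Matrix.of_apply, pb_freeHam, deriv_freeLax_x, deriv_freeLax_y]
  fin_cases i <;> fin_cases j <;> simp [Ring.lie_def, A, freeLax] <;> ring

theorem pbMatrix_timeFactor_freeLax (lam x y px py : ℝ) :
    pbMatrix timeFactor (freeLax lam) x y px py =
      timeFactor x y px py ^ 2 • ⁅A, (!![0, 0; 1, 0] : Matrix (Fin 2) (Fin 2) ℝ)⁆ := by
  have commutator : ⁅A, (!![0, 0; 1, 0] : Matrix (Fin 2) (Fin 2) ℝ)⁆ = !![1, 0; 0, -1] := by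
    simp [Ring.lie_def, A]
  ext i j
  rw [pbMatrix, Matrix.of_apply, pb_timeFactor, deriv_freeLax_px, commutator, Matrix.smul_apply,
    smul_eq_mul]

/-- Lax representation for the dual system in cartesian coordinates (with time
change): the Lax equation `{H̃, L̃(λ)} = [(1/x) • A, L̃(λ)]` holds entrywise for
`x ≠ 0`. -/
theorem lax_dual_cartesian :
    ∀ (lam x y px py : ℝ), x ≠ 0 → ∀ (i j : Fin 2),
      pb Ham (fun x y px py => L lam x y px py i j) x y px py =
        (((1 / x) • A) * L lam x y px py - L lam x y px py * ((1 / x) • A)) i j := by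
  intro lam x y px py hx i j
  have dual_lax : pbMatrix Ham (L lam) x y px py = ⁅(1 / x) • A, L lam x y px py⁆ := by
    have L_eq : L lam = fun x y px py =>
        freeLax lam x y px py + (timeFactor * freeHam) x y px py • !![0, 0; 1, 0] := by
      funext x y px py
      rw [L_eq_freeLax_add_smul, Ham_eq_timeFactor_mul_freeHam]
    rw [L_eq, Ham_eq_timeFactor_mul_freeHam]
    exact lax_time_change (partiallyDifferentiableAt_timeFactor y px py hx)
      (partiallyDifferentiableAt_freeHam x y px py)
      (partiallyDifferentiableAt_freeLax lam x y px py)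
      (pbMatrix_freeHam_freeLax lam x y px py) (pbMatrix_timeFactor_freeLax lam x y px py)
  exact congrFun (congrFun dual_lax i) j
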